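/- arXiv:1002.2866 — 2 statements merged into one kernel-verified Lean document; each statement's English description precedes it below -/
import Mathlib

section
/- Let G : ℝ² → ℝ² be a lift of a homeomorphism g of the two-torus homotopic to the identity, let Û ⊆ ℝ² be bounded and connected with G(Û) ∩ Û ≠ ∅, and let v ∈ ℝ² \ {0}. If ρ_Û(G) is a line segment of positive length contained in the line ℝ·v through the origin, then ρ(G) ⊆ ℝ·v. -/
noncomputable section
open Filter Topology Metric Set MeasureTheory

/-- Euclidean space `ℝ^d`. -/
abbrev E (d : ℕ) := EuclideanSpace ℝ (Fin d)

/-- The integer lattice `ℤ^d` as an additive subgroup of `ℝ^d`. -/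
def ZLat (d : ℕ) : AddSubgroup (E d) where
  carrier := {z | ∀ i, ∃ m : ℤ, z i = (m : ℝ)}
  zero_mem' := fun i => ⟨0, by simp⟩
  add_mem' := by
    intro x y hx hy i
    obtain ⟨m, hm⟩ := hx i
    obtain ⟨n, hn⟩ := hy i
    exact ⟨m + n, by simp [PiLp.add_apply, hm, hn]⟩
  neg_mem' := by
    intro x hx i
    obtain ⟨m, hm⟩ := hx i
    exact ⟨-m, by simp [PiLp.neg_apply, hm]⟩

/-- The torus `T^d = ℝ^d / ℤ^d`. -/
abbrev T (d : ℕ) := E d ⧸ ZLat d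

/-- The canonical projection `π : ℝ^d → T^d`. -/
def tpi (d : ℕ) : E d → T d := QuotientAddGroup.mk

/-- The set of rotation vectors of orbit segments starting in `W ⊆ ℝ^d`:
`{ρ | ∃ nᵢ → ∞, zᵢ ∈ W, (F^{nᵢ}(zᵢ) - zᵢ)/nᵢ → ρ}`. -/
def rotRel {d : ℕ} (F : E d → E d) (W : Set (E d)) : Set (E d) :=
  {ρ | ∃ (n : ℕ → ℕ) (z : ℕ → E d),
    Tendsto n atTop atTop ∧ (∀ i, z i ∈ W) ∧
    Tendsto (fun i => (n i : ℝ)⁻¹ • (F^[n i] (z i) - z i)) atTop (𝓝 ρ)}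

/-- The Misiurewicz–Ziemian rotation set `ρ(F)` of a lift `F`. -/
def rotSet {d : ℕ} (F : E d → E d) : Set (E d) := rotRel F Set.univ

/-- The rotation subset `ρ_U(F)` for `U ⊆ T^d` (starting points in `π⁻¹(U)`). -/
def rotU {d : ℕ} (F : E d → E d) (U : Set (T d)) : Set (E d) :=
  rotRel F (tpi d ⁻¹' U)

/-- `F` is a lift of the torus homeomorphism `f` (which is then homotopic to the
identity, as expressed by commutation with the deck translations). -/
def IsLift {d : ℕ} (F : E d ≃ₜ E d) (f : T d ≃ₜ T d) : Prop :=
  (∀ z : E d, tpi d (F z) = f (tpi d z)) ∧ ∀ z : E d, ∀ m ∈ ZLat d, F (z + m) = F z + m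

/-- `U ⊆ T^d` is bounded: the connected components of `π⁻¹(U)` are bounded. -/
def BoundedSet {d : ℕ} (U : Set (T d)) : Prop :=
  ∀ z ∈ tpi d ⁻¹' U, Bornology.IsBounded (connectedComponentIn (tpi d ⁻¹' U) z)

/-- `U ⊆ T^d` is recurrent: `f^n(U) ∩ U ≠ ∅` for infinitely many `n ≥ 1`. -/
def Recurrent {d : ℕ} (f : T d ≃ₜ T d) (U : Set (T d)) : Prop :=
  {n : ℕ | 1 ≤ n ∧ ((⇑f)^[n] '' U ∩ U).Nonempty}.Infinite

/-- The Euclidean scalar product `⟨z, v⟩` in `ℝ²`. -/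
def sdot (v z : E 2) : ℝ := z 0 * v 0 + z 1 * v 1

/-- `⟨z, v^⊥⟩` where `v^⊥ = (-v₂, v₁)`. -/
def pdot (v z : E 2) : ℝ := z 1 * v 0 - z 0 * v 1

/-- The affine line `L_{λ,v} = λv + {v}^⊥ = {z | ⟨z,v⟩ = λ⟨v,v⟩}`. -/
def lineL (lam : ℝ) (v : E 2) : Set (E 2) := {z | sdot v z = lam * sdot v v}

/-- A vector of `ℝ²` is rational if both coordinates are rational. -/
def RatVec (z : E 2) : Prop := (∃ q : ℚ, z 0 = (q : ℝ)) ∧ ∃ q : ℚ, z 1 = (q : ℝ)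

/-!
If `ρ(G)` contained some `w ∉ ℝ·v`, choose linear coordinates in which a nonzero `ρ ∈ ρ_Û(G)` is
`1` and `w` is `i`. The union of the first `n` images of `Û` is connected; its height is `o(n)`,
since `ρ_Û(G)` is horizontal, and for suitable `n` its length is at least `c n`. Let `m ≈ n / L` for
a large constant `L`. Since `w` has height `1`, `G^m` moves some point up by about `m`, and with it
all its lattice translates, one of which lies just below the middle of the long, flat union. In `m`
steps this point passes above the union without going around its ends, so the image under `G^m` of
a vertical segment below the union meets the image of the union, contradicting injectivity.
-/

open scoped unitInterval ComplexConjugate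

section PlanarTopology

lemma exists_exp_eq_of_unitSquare (f : C(I × I, ℂ)) (hf : ∀ x, f x ≠ 0) :
    ∃ L : C(I × I, ℂ), ∀ x, Complex.exp (L x) = f x := by
  let retract : C(ℝ × ℝ, I × I) :=
    ⟨Prod.map (projIcc 0 1 zero_le_one) (projIcc 0 1 zero_le_one),
      continuous_projIcc.prodMap continuous_projIcc⟩
  obtain ⟨L, ⟨-, hL⟩, -⟩ := Complex.isCoveringMapOn_exp.existsUnique_continuousMap_lifts
    (f.comp retract) (a₀ := 0) (Complex.exp_log (hf _)) fun x => hf _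
  refine ⟨L.comp ⟨Prod.map (↑) (↑), by fun_prop⟩, fun x => (congrFun hL _).trans ?_⟩
  exact congrArg f (Prod.ext (projIcc_val zero_le_one x.1) (projIcc_val zero_le_one x.2))

lemma im_sub_im_lt_pi {X : Type*} [TopologicalSpace X] [PreconnectedSpace X] {L : X → ℂ}
    (hL : Continuous L) {c : ℂ} (hc : ∀ x, 0 < (c * Complex.exp (L x)).re) (x y : X) :
    (L y).im - (L x).im < Real.pi := by
  by_contra! hxy
  obtain ⟨z, hz : (L z).im = (L x).im + Real.pi⟩ :=
    intermediate_value_univ x y (Complex.continuous_im.comp hL)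
      ⟨(le_add_iff_nonneg_right _).2 Real.pi_pos.le, by simp only [Function.comp_apply]; linarith⟩
  have hLz : L z = ((L z).re - (L x).re : ℝ) + L x + Real.pi * Complex.I := by
    apply Complex.ext <;> simp [hz]
  have hexp : c * Complex.exp (L z) =
      -(Real.exp ((L z).re - (L x).re) * (c * Complex.exp (L x))) := by
    rw [hLz, Complex.exp_add, Complex.exp_add, Complex.exp_pi_mul_I, ← hLz, Complex.ofReal_exp]
    ring
  have := hc z
  rw [hexp, Complex.neg_re, Complex.re_ofReal_mul] at this
  linarith [mul_pos (Real.exp_pos ((L z).re - (L x).re)) (hc x)]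

lemma im_lt_im_of_exp_mul_conj {X : Type*} [TopologicalSpace X] [PreconnectedSpace X] {L : X → ℂ}
    (hL : Continuous L) {c : ℂ} (hc : ∀ x, 0 < (c * Complex.exp (L x)).re) {x y : X}
    (hxy : (Complex.exp (L y) * conj (Complex.exp (L x))).im < 0) : (L y).im < (L x).im := by
  have hsin : Real.sin ((L y).im - (L x).im) < 0 := by
    rw [← Complex.exp_conj, ← Complex.exp_add, Complex.exp_im] at hxy
    simpa [← sub_eq_add_neg] using neg_of_mul_neg_right hxy (Real.exp_pos _).le
  by_contra! hle
  exact hsin.not_ge (Real.sin_nonneg_of_nonneg_of_le_pi (sub_nonneg.2 hle)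
    (im_sub_im_lt_pi hL hc x y).le)

lemma exists_eq_zero_of_unitSquare (f : C(I × I, ℂ))
    (hbot : ∀ s, 0 < (f (s, 0)).re) (htop : ∀ s, (f (s, 1)).re < 0)
    (hleft : ∀ t, 0 < (f (0, t)).im) (hright : ∀ t, (f (1, t)).im < 0) : ∃ x, f x = 0 := by
  by_contra! hf
  -- For a continuous logarithm `L` of `f`, `Im L` would strictly decrease around the boundary.
  obtain ⟨L, hL⟩ := exists_exp_eq_of_unitSquare f hf
  have bottom : (L (1, 0)).im < (L (0, 0)).im := by
    refine im_lt_im_of_exp_mul_conj (L := fun s : I => L (s, 0)) (by fun_prop) (c := 1)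
      (fun s => by simpa [hL] using hbot s) ?_
    simp only [hL, Complex.mul_im, Complex.conj_re, Complex.conj_im]
    nlinarith [hbot 0, hbot 1, hleft 0, hright 0]
  have right : (L (1, 1)).im < (L (1, 0)).im := by
    refine im_lt_im_of_exp_mul_conj (L := fun t : I => L (1, t)) (by fun_prop) (c := Complex.I)
      (fun t => by simpa [hL] using hright t) ?_
    simp only [hL, Complex.mul_im, Complex.conj_re, Complex.conj_im]
    nlinarith [hbot 1, htop 1, hright 0, hright 1]
  have top : (L (0, 1)).im < (L (1, 1)).im := by
    refine im_lt_im_of_exp_mul_conj (L := fun s : I => L (s, 1)) (by fun_prop) (c := -1)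
      (fun s => by simpa [hL] using htop s) ?_
    simp only [hL, Complex.mul_im, Complex.conj_re, Complex.conj_im]
    nlinarith [htop 0, htop 1, hleft 1, hright 1]
  have left : (L (0, 0)).im < (L (0, 1)).im := by
    refine im_lt_im_of_exp_mul_conj (L := fun t : I => L (0, t)) (by fun_prop) (c := -Complex.I)
      (fun t => by simpa [hL] using hleft t) ?_
    simp only [hL, Complex.mul_im, Complex.conj_re, Complex.conj_im]
    nlinarith [hbot 0, htop 0, hleft 0, hleft 1]
  linarith

lemma exists_path_eq_path {a b p q : ℂ} (γ : Path a b) (δ : Path p q)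
    (hleft : ∀ s, p.re < (γ s).re) (hright : ∀ s, (γ s).re < q.re)
    (hbelow : ∀ t, (δ t).im < a.im) (habove : ∀ t, b.im < (δ t).im) : ∃ s t, γ s = δ t := by
  obtain ⟨⟨s, t⟩, hst⟩ := exists_eq_zero_of_unitSquare
    ⟨fun x => γ x.1 - δ x.2, by fun_prop⟩ (by simpa using hleft) (by simpa using hright)
    (by simpa using hbelow) (by simpa using habove)
  exact ⟨s, t, sub_eq_zero.1 hst⟩

lemma exists_path_mem_of_isPreconnected {a b p q : ℂ} (γ : Path a b) {K : Set ℂ}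
    (hK : IsPreconnected K) (hp : p ∈ K) (hq : q ∈ K)
    (hleft : ∀ s, p.re < (γ s).re) (hright : ∀ s, (γ s).re < q.re)
    (hbelow : ∀ x ∈ K, x.im < a.im) (habove : ∀ x ∈ K, b.im < x.im) : ∃ s, γ s ∈ K := by
  by_contra! hγK
  set O : Set ℂ := Complex.im ⁻¹' Ioo b.im a.im ∩ (range γ)ᶜ
  have hO : IsOpen O := (isOpen_Ioo.preimage Complex.continuous_im).inter
    (isCompact_range γ.continuous).isClosed.isOpen_compl
  have hKO : K ⊆ O := fun x hx =>
    ⟨⟨habove x hx, hbelow x hx⟩, by rintro ⟨s, rfl⟩; exact hγK s hx⟩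
  have hpath : IsPathConnected (connectedComponentIn O p) :=
    hO.connectedComponentIn.isConnected_iff_isPathConnected.1
      (isConnected_connectedComponentIn_iff.2 (hKO hp))
  have hKcomp := hK.subset_connectedComponentIn hp hKO
  obtain ⟨δ, hδ⟩ := hpath.joinedIn p (hKcomp hp) q (hKcomp hq)
  have hδO : ∀ t, δ t ∈ O := fun t => connectedComponentIn_subset _ _ (hδ t)
  obtain ⟨s, t, hst⟩ := exists_path_eq_path γ δ hleft hright
    (fun t => (hδO t).1.2) fun t => (hδO t).1.1
  exact (hδO t).2 ⟨s, hst⟩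

/-- Were `H z` above the strip `|im| < h`, the image under `H` of the segment going down from `z`,
which misses `V`, would cross the strip between `H p` and `H q` and hence meet `H '' V`. -/
lemma im_apply_lt_of_im_le {H : ℂ → ℂ} (hHc : Continuous H) (hHi : Function.Injective H) {r h : ℝ}
    (hr : ∀ z, ‖H z - z‖ ≤ r) {V : Set ℂ} (hV : IsPreconnected V)
    (hVh : ∀ x ∈ V, -h < x.im) (hHV : ∀ x ∈ V, |(H x).im| < h)
    {p q z : ℂ} (hp : p ∈ V) (hq : q ∈ V) (hpz : p.re + 2 * r < z.re) (hzq : z.re + 2 * r < q.re)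
    (hz : z.im ≤ -h) : (H z).im < h := by
  by_contra! hHz
  have hre (x : ℂ) := abs_le.1 ((Complex.abs_re_le_norm _).trans (hr x))
  have him (x : ℂ) := abs_le.1 ((Complex.abs_im_le_norm _).trans (hr x))
  simp only [Complex.sub_re, Complex.sub_im] at hre him
  have hr0 : 0 ≤ r := (norm_nonneg _).trans (hr 0)
  let drop : I → ℂ := fun s => z - s * (r * Complex.I)
  have drop_re (s : I) : (drop s).re = z.re := by simp [drop]
  have drop_im (s : I) : (drop s).im = z.im - s * r := by simp [drop]
  let γ : Path (H z) (H (drop 1)) :=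
    { toFun := H ∘ drop, source' := by simp [drop], target' := rfl
      continuous_toFun := hHc.comp (by fun_prop) }
  obtain ⟨s, x, hx, hxs⟩ := exists_path_mem_of_isPreconnected γ
    (hV.image H hHc.continuousOn) (mem_image_of_mem H hp) (mem_image_of_mem H hq)
    (fun s => show (H p).re < (H (drop s)).re by linarith [hre p, hre (drop s), drop_re s])
    (fun s => show (H (drop s)).re < (H q).re by linarith [hre q, hre (drop s), drop_re s])
    (by rintro _ ⟨x, hx, rfl⟩; exact (abs_lt.1 (hHV x hx)).2.trans_le hHz)
    (by
      rintro _ ⟨x, hx, rfl⟩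
      have h1 := drop_im 1
      rw [Icc.coe_one, one_mul] at h1
      linarith [(him (drop 1)).2, (abs_lt.1 (hHV x hx)).1])
  have hxdrop : x = drop s := hHi hxs
  have hdrop : (drop s).im ≤ -h := by linarith [drop_im s, mul_nonneg s.2.1 hr0]
  exact hdrop.not_gt (hxdrop ▸ hVh x hx)

end PlanarTopology

section Iterates

lemma isPreconnected_biUnion_iterate_image {X : Type*} [TopologicalSpace X] {F : X → X}
    (hF : Continuous F) {U : Set X} (hU : IsPreconnected U) (hmeet : (F '' U ∩ U).Nonempty)
    (n : ℕ) : IsPreconnected (⋃ k ∈ Iic n, F^[k] '' U) := by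
  refine IsPreconnected.biUnion_of_chain ordConnected_Iic
    (fun k _ => hU.image _ (hF.iterate k).continuousOn) fun k _ _ => ?_
  obtain ⟨_, ⟨u, hu, rfl⟩, hFu⟩ := hmeet
  exact ⟨F^[k] (F u), mem_image_of_mem _ hFu, u, hu, rfl⟩

lemma norm_iterate_sub_le {V : Type*} [SeminormedAddCommGroup V] {F : V → V} {M : ℝ}
    (hM : ∀ z, ‖F z - z‖ ≤ M) (n : ℕ) (z : V) : ‖F^[n] z - z‖ ≤ n * M := by
  rw [← dist_eq_norm, dist_comm]
  refine (dist_le_range_sum_of_dist_le (f := fun k => F^[k] z) n (d := fun _ => M)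
    fun _ => ?_).trans_eq (by simp)
  rw [Function.iterate_succ_apply', dist_comm, dist_eq_norm]
  exact hM _

lemma map_iterate_sub_le {V : Type*} [AddCommGroup V] {F : V → V} (ℓ : V →+ ℝ) {c : ℝ}
    (hc : ∀ z, ℓ (F z - z) ≤ c) (n : ℕ) (z : V) : ℓ (F^[n] z - z) ≤ n * c := by
  induction n with
  | zero => simp
  | succ n ih =>
    have := hc (F^[n] z)
    rw [Function.iterate_succ_apply']
    rw [map_sub] at this ih ⊢
    push_cast
    linarith

/-- A translation moves `z` to just below the connected set `⋃ k ≤ n, F^[k] '' U`, which is a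
barrier for `F^[m]`. -/
lemma im_iterate_sub_lt {F : ℂ → ℂ} (hFc : Continuous F) (hFi : Function.Injective F) {S : ℝ}
    (hS : ∀ z, ‖F z - z‖ ≤ S) {D : ℝ}
    (hD : ∀ z t : ℂ, ∃ l, Function.Commute F (· + l) ∧ ‖z + l - t‖ ≤ D)
    {U : Set ℂ} (hU : IsPreconnected U) (hmeet : (F '' U ∩ U).Nonempty) {n m : ℕ} {h : ℝ}
    (hh : ∀ k ≤ n + m, ∀ u ∈ U, |(F^[k] u).im| < h) {u : ℂ} (hu : u ∈ U)
    (hlong : 4 * (m * S) + 2 * D < (F^[n] u - u).re) (z : ℂ) :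
    (F^[m] z - z).im < 2 * h + 2 * D := by
  obtain ⟨l, hl, hzl⟩ := hD z ⟨(u.re + (F^[n] u).re) / 2, -h - D⟩
  have hre := abs_le.1 ((Complex.abs_re_le_norm _).trans hzl)
  have him := abs_le.1 ((Complex.abs_im_le_norm _).trans hzl)
  rw [Complex.sub_re] at hre hlong
  rw [Complex.sub_im] at him
  have hbarrier : (F^[m] (z + l)).im < h := by
    refine im_apply_lt_of_im_le (hFc.iterate m) (hFi.iterate m) (norm_iterate_sub_le hS m)
      (isPreconnected_biUnion_iterate_image hFc hU hmeet n) (p := u) (q := F^[n] u) ?_ ?_ ?_ ?_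
      (by linarith) (by linarith) (by linarith)
    · simp only [mem_iUnion₂]
      rintro _ ⟨k, hk, u', hu', rfl⟩
      exact (abs_lt.1 (hh k (le_add_right hk) u' hu')).1
    · simp only [mem_iUnion₂]
      rintro _ ⟨k, hk, u', hu', rfl⟩
      rw [← Function.iterate_add_apply, add_comm]
      exact hh _ (Nat.add_le_add_right hk m) u' hu'
    · exact mem_biUnion (mem_Iic.2 n.zero_le) ⟨u, hu, rfl⟩
    · exact mem_biUnion self_mem_Iic ⟨u, hu, rfl⟩
  rw [(hl.iterate_left m).eq z, Complex.add_im] at hbarrier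
  rw [Complex.add_im] at him
  rw [Complex.sub_im]
  linarith

end Iterates

section RotationSets

variable {d : ℕ} {F : E d → E d} {W : Set (E d)} {M : ℝ}

/-- The mean displacement `(Fⁿ(z) - z) / n` of an orbit segment, whose limits as `n → ∞` are the
rotation vectors. It is `0` for `n = 0`. -/
def meanDisplacement (F : E d → E d) (n : ℕ) (z : E d) : E d := (n : ℝ)⁻¹ • (F^[n] z - z)

lemma norm_meanDisplacement_le (hM : ∀ z, ‖F z - z‖ ≤ M) (n : ℕ) (z : E d) :
    ‖meanDisplacement F n z‖ ≤ M := by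
  have hM0 : 0 ≤ M := (norm_nonneg _).trans (hM z)
  rw [meanDisplacement, norm_smul, norm_inv, Real.norm_natCast]
  exact inv_mul_le_of_le_mul₀ n.cast_nonneg hM0 (norm_iterate_sub_le hM n z)

lemma map_iterate_sub_eq_mul_meanDisplacement (ℓ : E d →L[ℝ] ℝ) (n : ℕ) (z : E d) :
    ℓ (F^[n] z - z) = n * ℓ (meanDisplacement F n z) := by
  rcases n.eq_zero_or_pos with rfl | hn
  · simp
  · rw [meanDisplacement, map_smul, smul_eq_mul, mul_inv_cancel_left₀ (by positivity)]

lemma eventually_meanDisplacement_mem (hM : ∀ z, ‖F z - z‖ ≤ M) {O : Set (E d)} (hO : IsOpen O)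
    (hWO : rotRel F W ⊆ O) : ∀ᶠ n in atTop, ∀ z ∈ W, meanDisplacement F n z ∈ O := by
  by_contra hfreq
  obtain ⟨n, hn, hnO⟩ := exists_seq_forall_of_frequently (not_eventually.1 hfreq)
  push Not at hnO
  choose z hzW hzO using hnO
  obtain ⟨ρ, ⟨-, hρO⟩, φ, hφ, hlim⟩ := ((isCompact_closedBall (0 : E d) M).diff hO).tendsto_subseq
    fun i => ⟨mem_closedBall_zero_iff.2 (norm_meanDisplacement_le hM (n i) (z i)), hzO i⟩
  exact hρO (hWO ⟨n ∘ φ, z ∘ φ, hn.comp hφ.tendsto_atTop, fun i => hzW _, hlim⟩)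

lemma exists_forall_abs_map_iterate_le (hM : ∀ z, ‖F z - z‖ ≤ M) (hW : Bornology.IsBounded W)
    (ℓ : E d →L[ℝ] ℝ) (hℓ : ∀ ρ ∈ rotRel F W, ℓ ρ = 0) {ε : ℝ} (hε : 0 < ε) :
    ∃ C, ∀ k : ℕ, ∀ u ∈ W, |ℓ (F^[k] u)| ≤ ε * k + C := by
  have hopen : IsOpen {ρ : E d | |ℓ ρ| < ε} := isOpen_lt (by fun_prop) continuous_const
  obtain ⟨N, hN⟩ := eventually_atTop.1 <| eventually_meanDisplacement_mem (W := W) hM hopen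
    fun ρ hρ => by simpa [hℓ ρ hρ] using hε
  obtain ⟨R, hR⟩ := hW.exists_norm_le
  refine ⟨‖ℓ‖ * (N * M) + ‖ℓ‖ * R, fun k u hu => ?_⟩
  have hM0 : 0 ≤ M := (norm_nonneg _).trans (hM u)
  have hstart : |ℓ u| ≤ ‖ℓ‖ * R := ℓ.le_opNorm_of_le (hR u hu)
  have hdisp : |ℓ (F^[k] u - u)| ≤ ε * k + ‖ℓ‖ * (N * M) := by
    rcases le_total N k with hk | hk
    · have hlate : |ℓ (F^[k] u - u)| ≤ k * ε := by
        rw [map_iterate_sub_eq_mul_meanDisplacement, abs_mul, Nat.abs_cast]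
        exact mul_le_mul_of_nonneg_left (hN k hk u hu).le k.cast_nonneg
      have : 0 ≤ ‖ℓ‖ * (N * M) := by positivity
      linarith
    · have hearly : |ℓ (F^[k] u - u)| ≤ ‖ℓ‖ * (N * M) :=
        ℓ.le_opNorm_of_le ((norm_iterate_sub_le hM k u).trans (by gcongr))
      have : 0 ≤ ε * k := by positivity
      linarith
  calc |ℓ (F^[k] u)| = |ℓ (F^[k] u - u) + ℓ u| := by rw [map_sub, sub_add_cancel]
    _ ≤ |ℓ (F^[k] u - u)| + |ℓ u| := abs_add_le _ _
    _ ≤ _ := by linarith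

lemma map_le_of_mem_rotRel (ℓ : E d →L[ℝ] ℝ) {c K : ℝ}
    (h : ∀ n : ℕ, ∀ z ∈ W, ℓ (F^[n] z - z) ≤ n * c + K) {ρ : E d} (hρ : ρ ∈ rotRel F W) :
    ℓ ρ ≤ c := by
  obtain ⟨n, z, hn, hz, hlim⟩ := hρ
  have hbound : Tendsto (fun i => c + K / n i) atTop (𝓝 c) := by
    simpa using tendsto_const_nhds.add
      ((tendsto_const_div_atTop_nhds_zero_nat K).comp hn)
  refine le_of_tendsto_of_tendsto ((ℓ.continuous.tendsto ρ).comp hlim) hbound ?_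
  filter_upwards [hn.eventually_gt_atTop 0] with i hi
  have hi' : (0 : ℝ) < n i := Nat.cast_pos.2 hi
  have := h (n i) (z i) (hz i)
  rw [map_iterate_sub_eq_mul_meanDisplacement] at this
  refine le_of_mul_le_mul_left (this.trans_eq ?_) hi'
  field_simp

lemma frequently_exists_mul_lt_map_iterate_sub (ℓ : E d →L[ℝ] ℝ) {ρ : E d} (hρ : ρ ∈ rotRel F W)
    {c : ℝ} (hc : c < ℓ ρ) : ∃ᶠ n : ℕ in atTop, ∃ u ∈ W, n * c < ℓ (F^[n] u - u) := by
  obtain ⟨n, u, hn, hu, hlim⟩ := hρ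
  refine hn.frequently (Eventually.frequently ?_)
  filter_upwards [((ℓ.continuous.tendsto ρ).comp hlim).eventually_const_lt hc,
    hn.eventually_gt_atTop 0] with i hi hpos
  refine ⟨u i, hu i, ?_⟩
  rw [map_iterate_sub_eq_mul_meanDisplacement]
  exact mul_lt_mul_of_pos_left hi (Nat.cast_pos.2 hpos)

lemma natCast_mul_map_le_of_mem_rotSet (hM : ∀ z, ‖F z - z‖ ≤ M) (ℓ : E d →L[ℝ] ℝ) {m : ℕ} {c : ℝ}
    (hc : ∀ z, ℓ (F^[m] z - z) ≤ c) {ρ : E d} (hρ : ρ ∈ rotSet F) : m * ℓ ρ ≤ c := by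
  rcases m.eq_zero_or_pos with rfl | hm
  · simpa using hc 0
  have hm' : (0 : ℝ) < m := Nat.cast_pos.2 hm
  have hM0 : 0 ≤ M := (norm_nonneg _).trans (hM 0)
  rw [← le_div_iff₀' hm']
  refine map_le_of_mem_rotRel ℓ (K := |c| + ‖ℓ‖ * (m * M)) (fun n z _ => ?_) hρ
  have hdiv : (n % m : ℕ) + (m : ℝ) * (n / m : ℕ) = n := by exact_mod_cast Nat.mod_add_div n m
  have hmod : ((n % m : ℕ) : ℝ) ≤ m := by exact_mod_cast (Nat.mod_lt n hm).le
  have hblocks : ℓ (F^[m * (n / m)] z - z) ≤ (n / m : ℕ) * c := by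
    rw [Function.iterate_mul]
    exact map_iterate_sub_le (ℓ : E d →+ ℝ) hc _ z
  have hrest : ℓ (F^[n] z - F^[m * (n / m)] z) ≤ ‖ℓ‖ * (m * M) := by
    refine (le_abs_self _).trans (ℓ.le_opNorm_of_le ?_)
    conv_lhs => rw [← Nat.mod_add_div n m, Function.iterate_add_apply, Nat.mod_add_div]
    exact (norm_iterate_sub_le hM _ _).trans (by gcongr)
  have hcount : (n / m : ℕ) * c ≤ n * (c / m) + |c| := by
    have hsplit : (n / m : ℕ) * c = n * (c / m) - (n % m : ℕ) / m * c := by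
      rw [← hdiv]; field_simp; ring
    have hfrac : |(n % m : ℕ) / m * c| ≤ |c| := by
      rw [abs_mul, abs_of_nonneg (by positivity)]
      exact mul_le_of_le_one_left (abs_nonneg c) ((div_le_one hm').2 hmod)
    linarith [neg_abs_le ((n % m : ℕ) / m * c)]
  rw [map_sub] at *
  linarith

end RotationSets

section Lattice

lemma exists_mem_ZLat_norm_add_le {d : ℕ} (z : E d) : ∃ l ∈ ZLat d, ‖z + l‖ ≤ √d := by
  refine ⟨WithLp.toLp 2 fun i => ((-⌊z i⌋ : ℤ) : ℝ), fun i => ⟨-⌊z i⌋, rfl⟩, ?_⟩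
  rw [EuclideanSpace.norm_eq]
  apply Real.sqrt_le_sqrt
  calc ∑ i, ‖_‖ ^ 2 ≤ ∑ _ : Fin d, (1 : ℝ) := Finset.sum_le_sum fun i _ => ?_
    _ = d := by simp
  have : z i + ((-⌊z i⌋ : ℤ) : ℝ) = Int.fract (z i) := by simp [Int.fract, sub_eq_add_neg]
  rw [PiLp.add_apply]
  simp only [this, Real.norm_eq_abs, sq_abs]
  exact pow_le_one₀ (Int.fract_nonneg _) (Int.fract_lt_one _).le

lemma exists_norm_apply_sub_le {d : ℕ} {F : E d → E d} (hF : Continuous F)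
    (hper : ∀ z, ∀ l ∈ ZLat d, F (z + l) = F z + l) : ∃ M, ∀ z, ‖F z - z‖ ≤ M := by
  obtain ⟨M, hM⟩ := (isCompact_closedBall (0 : E d) √d).exists_bound_of_continuousOn
    (f := fun z => F z - z) (by fun_prop)
  refine ⟨M, fun z => ?_⟩
  obtain ⟨l, hl, hz⟩ := exists_mem_ZLat_norm_add_le z
  simpa [hper z l hl] using hM (z + l) (mem_closedBall_zero_iff.2 hz)

end Lattice

section PlaneMaps

lemma exists_continuousLinearEquiv_complex {V : Type*} [NormedAddCommGroup V] [NormedSpace ℝ V]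
    [FiniteDimensional ℝ V] (hV : Module.finrank ℝ V = 2) {x y : V}
    (hxy : LinearIndependent ℝ ![x, y]) : ∃ Φ : V ≃L[ℝ] ℂ, Φ x = 1 ∧ Φ y = Complex.I := by
  let b := basisOfLinearIndependentOfCardEqFinrank hxy (by simp [hV])
  let Φ := b.equiv Complex.basisOneI (Equiv.refl _)
  have hΦ (i : Fin 2) : Φ (![x, y] i) = Complex.basisOneI i := by
    simpa [b] using b.equiv_apply i Complex.basisOneI (Equiv.refl _)
  exact ⟨Φ.toContinuousLinearEquiv, by simpa using hΦ 0, by simpa using hΦ 1⟩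

variable {G : E 2 → E 2} {U : Set (E 2)} (hGc : Continuous G) (hGi : Function.Injective G)
  (hper : ∀ z, ∀ l ∈ ZLat 2, G (z + l) = G z + l) (hUc : IsPreconnected U)
  (hmeet : (G '' U ∩ U).Nonempty) (Φ : E 2 ≃L[ℝ] ℂ)
include hGc hGi hper hUc hmeet

lemma im_map_iterate_sub_lt {M : ℝ} (hM : ∀ z, ‖G z - z‖ ≤ M) {n m : ℕ} {h : ℝ}
    (hh : ∀ k ≤ n + m, ∀ u ∈ U, |(Φ (G^[k] u)).im| < h) {u : E 2} (hu : u ∈ U)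
    (hlong : 4 * (m * (‖(Φ : E 2 →L[ℝ] ℂ)‖ * M)) + 2 * (‖(Φ : E 2 →L[ℝ] ℂ)‖ * √2) <
      (Φ (G^[n] u - u)).re) (z : E 2) :
    (Φ (G^[m] z - z)).im < 2 * h + 2 * (‖(Φ : E 2 →L[ℝ] ℂ)‖ * √2) := by
  let F : ℂ → ℂ := Φ ∘ G ∘ Φ.symm
  have hΦF : Function.Semiconj Φ G F := fun z => by simp [F]
  have hiter (k : ℕ) (z : E 2) : F^[k] (Φ z) = Φ (G^[k] z) := ((hΦF.iterate_right k).eq z).symm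
  have hS (z : ℂ) : ‖F z - z‖ ≤ ‖(Φ : E 2 →L[ℝ] ℂ)‖ * M := by
    simpa [F] using (Φ : E 2 →L[ℝ] ℂ).le_opNorm_of_le (hM (Φ.symm z))
  have hD (z t : ℂ) : ∃ l, Function.Commute F (· + l) ∧
      ‖z + l - t‖ ≤ ‖(Φ : E 2 →L[ℝ] ℂ)‖ * √2 := by
    obtain ⟨l, hl, hzl⟩ := exists_mem_ZLat_norm_add_le (Φ.symm (z - t))
    refine ⟨Φ l, fun x => by simp [F, hper _ l hl], ?_⟩
    simpa [sub_add_eq_add_sub] using (Φ : E 2 →L[ℝ] ℂ).le_opNorm_of_le hzl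
  have hmeet' : (F '' (Φ '' U) ∩ Φ '' U).Nonempty := by
    rw [← hΦF.set_image.eq, ← image_inter Φ.injective]
    exact hmeet.image Φ
  have := im_iterate_sub_lt (Φ.continuous.comp (hGc.comp Φ.symm.continuous))
    (Φ.injective.comp (hGi.comp Φ.symm.injective)) hS hD (hUc.image Φ Φ.continuous.continuousOn)
    hmeet' (n := n) (m := m) (h := h)
    (by rintro k hk _ ⟨u, hu, rfl⟩; rw [hiter]; exact hh k hk u hu)
    (mem_image_of_mem Φ hu) (by rwa [hiter, ← map_sub]) (Φ z)
  rwa [hiter, ← map_sub] at this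

lemma im_map_iterate_div_sub_le {M : ℝ} (hM : ∀ z, ‖G z - z‖ ≤ M) {δ C : ℝ} (hδ : 0 ≤ δ)
    (hheight : ∀ k : ℕ, ∀ u ∈ U, |(Φ (G^[k] u)).im| ≤ δ * k + C) {L : ℕ} {c : ℝ} (hc : 0 ≤ c)
    (hL : 4 * (‖(Φ : E 2 →L[ℝ] ℂ)‖ * M) + 2 * (‖(Φ : E 2 →L[ℝ] ℂ)‖ * √2) ≤ L * c) {n : ℕ}
    (hm : 1 ≤ n / L) {u : E 2} (hu : u ∈ U) (hlength : n * c < (Φ (G^[n] u - u)).re) (z : E 2) :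
    (Φ (G^[n / L] z - z)).im ≤
      2 * (δ * ((L + 1) * ((n / L : ℕ) + 1)) + C + 1) + 2 * (‖(Φ : E 2 →L[ℝ] ℂ)‖ * √2) := by
  set D := ‖(Φ : E 2 →L[ℝ] ℂ)‖ * √2
  set m := n / L
  have hL0 : 0 < L := Nat.pos_of_ne_zero fun hL0 => by simp [m, hL0] at hm
  have hm1 : (1 : ℝ) ≤ m := Nat.one_le_cast.2 hm
  have hmn : (L : ℝ) * m ≤ n := by exact_mod_cast Nat.mul_div_le n L
  have hnm : (n : ℝ) ≤ L * (m + 1) := by exact_mod_cast (Nat.lt_mul_div_succ n hL0).le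
  have hD : D ≤ D * m := le_mul_of_one_le_right (by positivity) hm1
  refine (im_map_iterate_sub_lt hGc hGi hper hUc hmeet Φ hM (n := n) (fun k hk x hx => ?_) hu
    ?_ z).le
  · have hk' : (k : ℝ) ≤ (L + 1) * (m + 1) := by
      have : (k : ℝ) ≤ n + m := by exact_mod_cast hk
      linarith
    calc |(Φ (G^[k] x)).im| ≤ δ * k + C := hheight k x hx
      _ ≤ δ * ((L + 1) * (m + 1)) + C := by gcongr
      _ < _ := lt_add_one _
  · calc 4 * (m * (‖(Φ : E 2 →L[ℝ] ℂ)‖ * M)) + 2 * D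
        ≤ (4 * (‖(Φ : E 2 →L[ℝ] ℂ)‖ * M) + 2 * D) * m := by linarith
      _ ≤ L * c * m := by gcongr
      _ = L * m * c := by ring
      _ ≤ n * c := by gcongr
      _ < _ := hlength

lemma exists_frequently_im_map_iterate_sub_le (hUb : Bornology.IsBounded U)
    (him : ∀ ρ ∈ rotRel G U, (Φ ρ).im = 0) {ρ : E 2} (hρ : ρ ∈ rotRel G U) (hre : 0 < (Φ ρ).re)
    {ε : ℝ} (hε : 0 < ε) :
    ∃ C, ∃ᶠ m : ℕ in atTop, ∀ z, (Φ (G^[m] z - z)).im ≤ ε * m + C := by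
  obtain ⟨M, hM⟩ := exists_norm_apply_sub_le hGc hper
  obtain ⟨c, hc0, hc⟩ := exists_between hre
  obtain ⟨L, hL0, hL⟩ : ∃ L : ℕ, 0 < L ∧
      4 * (‖(Φ : E 2 →L[ℝ] ℂ)‖ * M) + 2 * (‖(Φ : E 2 →L[ℝ] ℂ)‖ * √2) ≤ L * c :=
    ((eventually_gt_atTop 0).and ((tendsto_natCast_atTop_atTop.atTop_mul_const
      hc0).eventually_ge_atTop _)).exists
  obtain ⟨C, hheight⟩ := exists_forall_abs_map_iterate_le hM hUb
    (Complex.imCLM ∘L (Φ : E 2 →L[ℝ] ℂ)) him (ε := ε / (2 * (L + 1))) (by positivity)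
  have hlength : ∃ᶠ n : ℕ in atTop, ∃ u ∈ U, n * c < (Φ (G^[n] u - u)).re :=
    frequently_exists_mul_lt_map_iterate_sub (Complex.reCLM ∘L (Φ : E 2 →L[ℝ] ℂ)) hρ hc
  have hdiv : Tendsto (fun n : ℕ => n / L) atTop atTop := Nat.tendsto_div_const_atTop hL0.ne'
  refine ⟨ε + 2 * C + 2 + 2 * (‖(Φ : E 2 →L[ℝ] ℂ)‖ * √2), hdiv.frequently
    ((hlength.and_eventually (hdiv.eventually_ge_atTop 1)).mono ?_)⟩
  rintro n ⟨⟨u, hu, hun⟩, hm⟩ z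
  refine (im_map_iterate_div_sub_le hGc hGi hper hUc hmeet Φ hM (by positivity) hheight hc0.le hL
    hm hu hun z).trans_eq ?_
  field_simp
  ring

lemma im_nonpos_of_mem_rotSet (hUb : Bornology.IsBounded U)
    (him : ∀ ρ ∈ rotRel G U, (Φ ρ).im = 0) {ρ : E 2} (hρ : ρ ∈ rotRel G U) (hre : 0 < (Φ ρ).re)
    {w : E 2} (hw : w ∈ rotSet G) : (Φ w).im ≤ 0 := by
  obtain ⟨M, hM⟩ := exists_norm_apply_sub_le hGc hper
  refine le_of_forall_pos_le_add fun ε hε => ?_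
  obtain ⟨C, hC⟩ :=
    exists_frequently_im_map_iterate_sub_le hGc hGi hper hUc hmeet Φ hUb him hρ hre hε
  by_contra! hlt
  have hgrow : ∀ᶠ m : ℕ in atTop, C < m * ((Φ w).im - ε) :=
    (tendsto_natCast_atTop_atTop.atTop_mul_const (by linarith)).eventually_gt_atTop C
  obtain ⟨m, hmC, hm⟩ := (hC.and_eventually hgrow).exists
  have : m * (Φ w).im ≤ ε * m + C :=
    natCast_mul_map_le_of_mem_rotSet hM (Complex.imCLM ∘L (Φ : E 2 →L[ℝ] ℂ)) hmC hw
  linarith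

end PlaneMaps

theorem rotation_set_in_rational_line_general (G : E 2 → E 2) (hGc : Continuous G)
    (hGi : Function.Injective G) (hper : ∀ z, ∀ l ∈ ZLat 2, G (z + l) = G z + l)
    (Uh : Set (E 2)) (hUb : Bornology.IsBounded Uh) (hUc : IsPreconnected Uh)
    (hmeet : (G '' Uh ∩ Uh).Nonempty) (v : E 2) (hne : ∃ ρ ∈ rotRel G Uh, ρ ≠ 0)
    (hsub : rotRel G Uh ⊆ (Submodule.span ℝ {v} : Submodule ℝ (E 2))) :
    rotSet G ⊆ (Submodule.span ℝ {v} : Submodule ℝ (E 2)) := by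
  obtain ⟨ρ, hρ, hρ0⟩ := hne
  have hspan : Submodule.span ℝ {v} = Submodule.span ℝ {ρ} := by
    obtain ⟨a, rfl⟩ := Submodule.mem_span_singleton.1 (hsub hρ)
    have ha : a ≠ 0 := fun ha => hρ0 (by rw [ha, zero_smul])
    exact (Submodule.span_singleton_smul_eq ha.isUnit v).symm
  rw [hspan] at hsub ⊢
  intro w hw
  by_contra hwρ
  have hindep : LinearIndependent ℝ ![ρ, w] :=
    (LinearIndependent.pair_iff' hρ0).2 fun a ha => hwρ (Submodule.mem_span_singleton.2 ⟨a, ha⟩)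
  obtain ⟨Φ, hΦρ, hΦw⟩ := exists_continuousLinearEquiv_complex finrank_euclideanSpace_fin hindep
  have him : ∀ r ∈ rotRel G Uh, (Φ r).im = 0 := fun r hr => by
    obtain ⟨a, rfl⟩ := Submodule.mem_span_singleton.1 (hsub hr)
    simp [hΦρ]
  have := im_nonpos_of_mem_rotSet hGc hGi hper hUc hmeet Φ hUb him hρ (by simp [hΦρ]) hw
  norm_num [hΦw] at this

/-- **Lemma (segments through the origin confine the rotation set).**
If `Û ⊆ ℝ²` is bounded and connected with `G(Û) ∩ Û ≠ ∅` and `ρ_Û(G)` is a line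
segment of positive length contained in the line `ℝ·v`, then `ρ(G) ⊆ ℝ·v`. -/
theorem rotation_set_in_rational_line
    (G : E 2 ≃ₜ E 2) (g : T 2 ≃ₜ T 2) (hlift : IsLift G g)
    (Uh : Set (E 2)) (hUb : Bornology.IsBounded Uh) (hUc : IsConnected Uh)
    (hmeet : ((⇑G) '' Uh ∩ Uh).Nonempty)
    (v : E 2) (hv : v ≠ 0)
    (p q : E 2) (hpq : p ≠ q) (hseg : rotRel (⇑G) Uh = segment ℝ p q)
    (hsub : rotRel (⇑G) Uh ⊆ (Submodule.span ℝ {v} : Submodule ℝ (E 2))) :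
    rotSet (⇑G) ⊆ (Submodule.span ℝ {v} : Submodule ℝ (E 2)) := by
  refine rotation_set_in_rational_line_general G G.continuous G.injective hlift.2 Uh hUb
    hUc.isPreconnected hmeet v ?_ hsub
  exact (nontrivial_of_mem_mem_ne (hseg ▸ left_mem_segment ℝ p q)
    (hseg ▸ right_mem_segment ℝ p q) hpq).exists_ne 0
end
end

section
/- Let ψ₁, ψ₂ : ℝ → ℝ be continuous 1-periodic functions with ψ₁(0) = ψ₂(0) = 0 and ψ₁(1/2) = ψ₂(1/2) = 1, and let F : ℝ² → ℝ², F(x,y) = (x + ψ₂(y + ψ₁(x)), y + ψ₁(x)). Then F is a lift of a homeomorphism of the two-torus homotopic to the identity; the points (0,0), (1/2,0), (0,1/2), (1/2,1/2) satisfy F(0,0) = (0,0), F(1/2,0) = (1/2,0) + (0,1), F(0,1/2) = (0,1/2) + (1,0), F(1/2,1/2) = (1/2,1/2) + (1,1), so that (0,0), (0,1), (1,0), (1,1) ∈ ρ(F); and consequently, since ρ(F) is convex, [0,1]² ⊆ ρ(F). -/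
noncomputable section
open Filter Topology Metric Set MeasureTheory

/-- The point `(a, b) ∈ ℝ²`. -/
def pt (a b : ℝ) : E 2 := (WithLp.equiv 2 (Fin 2 → ℝ)).symm ![a, b]

/-!
Let `F` be the lift. An iterate `Fⁿ` is injective and commutes with integer translations, so the
image under `Fⁿ` of a square `Q` embedded in the torus is disjoint from its translates by nonzero
lattice vectors. By a winding number argument, a planar arc above a horizontal line whose endpoints
are on that line, at distance more than `1`, meets its own horizontal unit translate. So, if
`Fⁿ(Q)` misses the square of radius `1` around a point `w`, it meets the horizontal line through
`w` on at most one side of `w`, and likewise for the vertical line; this keeps `Fⁿ(Q)` out of one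
of the four open quadrants at `w`.

The vertices of `Q = [0, 1/2]²` move at the four extreme speeds, so for `ρ ∈ (0, 1)²` and large `n`
their images lie in the four quadrants at `w = nρ`. Hence some point of `Fⁿ(Q)` is close to `nρ`,
which puts `ρ` in the rotation set, and the rotation set is closed.
-/

/-! ### Planar arcs and their translates -/

theorem im_sub_im_eq_arg_sub_arg {X : Type*} [TopologicalSpace X] [PreconnectedSpace X]
    {θ g : X → ℂ} (hθ : Continuous θ) (hexp : ∀ x, Complex.exp (θ x) = g x)
    (hg : ∀ x, 0 ≤ (g x).im) (x y : X) :
    (θ y).im - (θ x).im = (g y).arg - (g x).arg := by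
  have hg0 x : g x ≠ 0 := hexp x ▸ Complex.exp_ne_zero _
  have harg : Continuous fun z ↦ (g z).arg := by
    have hgc : Continuous g := (funext hexp : Complex.exp ∘ θ = g) ▸ Complex.continuous_exp.comp hθ
    simp_rw [fun z ↦ Complex.arg_of_im_nonneg_of_ne_zero (hg z) (hg0 z)]
    exact Real.continuous_arccos.comp
      ((Complex.continuous_re.comp hgc).div hgc.norm fun z ↦ norm_ne_zero_iff.2 (hg0 z))
  have hcoe z : ((θ z).im : Real.Angle) = (g z).arg := by
    rw [← hexp, Complex.arg_exp, Real.Angle.coe_toIocMod]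
  have heq := (AddCircle.isCoveringMap_coe (2 * Real.pi)).eq_of_comp_eq
    (g₁ := fun z ↦ (θ z).im - (θ x).im) (g₂ := fun z ↦ (g z).arg - (g x).arg) (by fun_prop)
    (by fun_prop) (funext fun z ↦ ?_) x (by simp)
  · exact congrFun heq y
  · change (((θ z).im - (θ x).im : ℝ) : Real.Angle) = (((g z).arg - (g x).arg : ℝ) : Real.Angle)
    rw [Real.Angle.coe_sub, Real.Angle.coe_sub, hcoe, hcoe]

theorem exists_continuous_exp_eq {X : Type*} [TopologicalSpace X] [SimplyConnectedSpace X]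
    [LocallyPathConnectedSpace X] {g : X → ℂ} (hg : Continuous g) (hg0 : ∀ x, g x ≠ 0) :
    ∃ θ : X → ℂ, Continuous θ ∧ ∀ x, Complex.exp (θ x) = g x := by
  obtain ⟨x₀⟩ : Nonempty X := inferInstance
  obtain ⟨θ, ⟨-, hθ⟩, -⟩ := Complex.isCoveringMapOn_exp.existsUnique_continuousMap_lifts
    ⟨g, hg⟩ (Complex.exp_log (hg0 x₀)) hg0
  exact ⟨θ, θ.continuous, congrFun hθ⟩

theorem exists_eq_of_interlacing {X Y : Type*} [TopologicalSpace X] [TopologicalSpace Y]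
    [ContractibleSpace X] [ContractibleSpace Y]
    [LocallyPathConnectedSpace X] [LocallyPathConnectedSpace Y] {α : X → ℂ} {β : Y → ℂ}
    (hα : Continuous α) (hβ : Continuous β) (hα_im : ∀ x, 0 ≤ (α x).im) (hβ_im : ∀ y, 0 ≤ (β y).im)
    {x₀ x₁ : X} {y₀ y₁ : Y} (hx₀ : (α x₀).im = 0) (hx₁ : (α x₁).im = 0)
    (hy₀ : (β y₀).im = 0) (hy₁ : (β y₁).im = 0) (h₀₀ : (α x₀).re < (β y₀).re)
    (h₁₀ : (β y₀).re < (α x₁).re) (h₁₁ : (α x₁).re < (β y₁).re) :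
    ∃ x y, α x = β y := by
  by_contra! hne
  -- Around the boundary of the rectangle with corners `(xᵢ, yⱼ)`, the imaginary part of a logarithm
  -- of `α x - β y` would change by `-2π`.
  obtain ⟨θ, hθ, hexp⟩ := exists_continuous_exp_eq (g := fun z : X × Y ↦ α z.1 - β z.2)
    (by fun_prop) fun z ↦ sub_ne_zero.2 (hne z.1 z.2)
  have hexp' z : Complex.exp (θ z + Real.pi * Complex.I) = β z.2 - α z.1 := by
    simp [Complex.exp_add, hexp]
  have arg_zero {z w : ℂ} (hz : z.im = 0) (hw : w.im = 0) (h : w.re < z.re) : (z - w).arg = 0 :=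
    Complex.arg_eq_zero_iff.2 ⟨by simpa using h.le, by simp [hz, hw]⟩
  have arg_pi {z w : ℂ} (hz : z.im = 0) (hw : w.im = 0) (h : z.re < w.re) :
      (z - w).arg = Real.pi :=
    Complex.arg_eq_pi_iff.2 ⟨by simpa using h, by simp [hz, hw]⟩
  have bottom := im_sub_im_eq_arg_sub_arg (θ := fun x ↦ θ (x, y₀)) (by fun_prop)
    (fun x ↦ hexp (x, y₀)) (by simpa [hy₀] using hα_im) x₀ x₁
  have right := im_sub_im_eq_arg_sub_arg (θ := fun y ↦ θ (x₁, y) + Real.pi * Complex.I)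
    (by fun_prop) (fun y ↦ hexp' (x₁, y)) (by simpa [hx₁] using hβ_im) y₀ y₁
  have top := im_sub_im_eq_arg_sub_arg (θ := fun x ↦ θ (x, y₁)) (by fun_prop)
    (fun x ↦ hexp (x, y₁)) (by simpa [hy₁] using hα_im) x₀ x₁
  have left := im_sub_im_eq_arg_sub_arg (θ := fun y ↦ θ (x₀, y) + Real.pi * Complex.I)
    (by fun_prop) (fun y ↦ hexp' (x₀, y)) (by simpa [hx₀] using hβ_im) y₀ y₁
  simp only [arg_zero hx₁ hy₀ h₁₀, arg_pi hx₀ hy₀ h₀₀] at bottom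
  simp only [arg_zero hy₁ hx₁ h₁₁, arg_pi hy₀ hx₁ h₁₀, Complex.add_im] at right
  simp only [arg_pi hx₁ hy₁ h₁₁, arg_pi hx₀ hy₁ (h₀₀.trans (h₁₀.trans h₁₁))] at top
  simp only [arg_zero hy₁ hx₀ (h₀₀.trans (h₁₀.trans h₁₁)), arg_zero hy₀ hx₀ h₀₀,
    Complex.add_im] at left
  linarith [Real.pi_pos]

theorem exists_chord_of_nonneg {p q : ℝ → ℝ} {a b ℓ : ℝ} (hab : a ≤ b)
    (hp : ContinuousOn p (Icc a b)) (hq : ContinuousOn q (Icc a b)) (hqa : q a = 0) (hqb : q b = 0)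
    (hq_nonneg : ∀ t ∈ Icc a b, 0 ≤ q t) (hℓ : 0 < ℓ) (hlen : p a + ℓ < p b) :
    ∃ s ∈ Icc a b, ∃ t ∈ Icc a b, p s + ℓ = p t ∧ q s = q t := by
  have hconv := convex_Icc (𝕜 := ℝ) a b
  have := hconv.contractibleSpace ⟨a, left_mem_Icc.2 hab⟩
  have := hconv.locallyPathConnectedSpace
  have harc (c : ℝ) : Continuous fun t : Icc a b ↦ ((p t + c : ℝ) + q t * Complex.I : ℂ) :=
    (Complex.continuous_ofReal.comp (hp.domRestrict.add continuous_const)).add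
      ((Complex.continuous_ofReal.comp hq.domRestrict).mul continuous_const)
  obtain ⟨t, s, hts⟩ := exists_eq_of_interlacing
    (harc 0) (harc ℓ) (by simpa using hq_nonneg) (by simpa using hq_nonneg)
    (x₀ := ⟨a, left_mem_Icc.2 hab⟩) (x₁ := ⟨b, right_mem_Icc.2 hab⟩)
    (y₀ := ⟨a, left_mem_Icc.2 hab⟩) (y₁ := ⟨b, right_mem_Icc.2 hab⟩)
    (by simp [hqa]) (by simp [hqb]) (by simp [hqa]) (by simp [hqb])
    (by simpa using hℓ) (by simpa using hlen) (by simpa using hℓ)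
  obtain ⟨hre, him⟩ := Complex.ext_iff.1 hts
  exact ⟨s, s.2, t, t.2, by simpa using hre.symm, by simpa using him.symm⟩

theorem exists_consecutive {A B : Set ℝ} (hA : IsClosed A) (hB : IsClosed B) {a b : ℝ}
    (ha : a ∈ A) (hb : b ∈ B) (hab : a ≤ b) :
    ∃ a' ∈ A, ∃ b' ∈ B, a' ≤ b' ∧ Disjoint (Ioo a' b') (A ∪ B) := by
  obtain ⟨a', ⟨ha'I, ha'⟩, ha'max⟩ := (isCompact_Icc.inter_right hA).exists_isGreatest
    ⟨a, left_mem_Icc.2 hab, ha⟩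
  obtain ⟨b', ⟨hb'I, hb'⟩, hb'min⟩ := (isCompact_Icc.inter_right hB).exists_isLeast
    ⟨b, right_mem_Icc.2 ha'I.2, hb⟩
  refine ⟨a', ha', b', hb', hb'I.1, disjoint_left.2 fun t ht ↦ ?_⟩
  have htb := ht.2.le.trans hb'I.2
  rintro (htA | htB)
  · exact ht.1.not_ge (ha'max ⟨⟨ha'I.1.trans ht.1.le, htb⟩, htA⟩)
  · exact ht.2.not_ge (hb'min ⟨⟨ht.1.le, htb⟩, htB⟩)

theorem forall_nonneg_or_forall_nonpos {q : ℝ → ℝ} {a b : ℝ} (hq : ContinuousOn q (Icc a b))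
    (hqa : q a = 0) (hqb : q b = 0) (hne : ∀ t ∈ Ioo a b, q t ≠ 0) :
    (∀ t ∈ Icc a b, 0 ≤ q t) ∨ ∀ t ∈ Icc a b, q t ≤ 0 := by
  by_contra! ⟨⟨s, hs, hqs⟩, t, ht, hqt⟩
  have mem_Ioo {r : ℝ} (hr : r ∈ Icc a b) (hqr : q r ≠ 0) : r ∈ Ioo a b :=
    ⟨hr.1.lt_of_ne (by grind), hr.2.lt_of_ne (by grind)⟩
  obtain ⟨r, hr, hqr⟩ := isPreconnected_Ioo.intermediate_value (mem_Ioo hs hqs.ne)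
    (mem_Ioo ht hqt.ne') (hq.mono Ioo_subset_Icc_self) ⟨hqs.le, hqt.le⟩
  exact hne r hr hqr

theorem exists_chord_of_lt_abs {p q : ℝ → ℝ} (hp : Continuous p) (hq : Continuous q)
    {a b ℓ : ℝ} (hab : a ≤ b) (hqa : q a = 0) (hqb : q b = 0) (hpa : p a ≤ 0) (hpb : 0 ≤ p b)
    (hℓ : 0 < ℓ) (hav : ∀ t, q t = 0 → ℓ < |p t|) :
    ∃ s t, p s + ℓ = p t ∧ q s = q t := by
  obtain ⟨a', ⟨hqa', hpa'⟩, b', ⟨hqb', hpb'⟩, hab', hdisj⟩ :=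
    exists_consecutive (A := {t | q t = 0 ∧ p t ≤ 0}) (B := {t | q t = 0 ∧ 0 ≤ p t})
      ((isClosed_eq hq continuous_const).inter (isClosed_le hp continuous_const))
      ((isClosed_eq hq continuous_const).inter (isClosed_le continuous_const hp))
      ⟨hqa, hpa⟩ ⟨hqb, hpb⟩ hab
  have hlen : p a' + ℓ < p b' := by
    have ha := hav a' hqa'
    have hb := hav b' hqb'
    rw [abs_of_nonpos hpa'] at ha
    rw [abs_of_nonneg hpb'] at hb
    linarith
  have hne : ∀ t ∈ Ioo a' b', q t ≠ 0 := fun t ht hqt ↦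
    disjoint_left.1 hdisj ht ((le_total (p t) 0).imp (⟨hqt, ·⟩) (⟨hqt, ·⟩))
  rcases forall_nonneg_or_forall_nonpos hq.continuousOn hqa' hqb' hne with hsign | hsign
  · obtain ⟨s, -, t, -, hst⟩ := exists_chord_of_nonneg hab' hp.continuousOn hq.continuousOn
      hqa' hqb' hsign hℓ hlen
    exact ⟨s, t, hst⟩
  · obtain ⟨s, -, t, -, hpst, hqst⟩ := exists_chord_of_nonneg (q := -q) hab' hp.continuousOn
      hq.neg.continuousOn (by simp [hqa']) (by simp [hqb']) (by simpa using hsign) hℓ hlen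
    exact ⟨s, t, hpst, neg_injective hqst⟩

theorem exists_forall_smul_pos {X : Type*} [TopologicalSpace X] [PathConnectedSpace X]
    {u v : X → ℝ} (hu : Continuous u) (hv : Continuous v) {ℓ : ℝ} (hℓ : 0 < ℓ)
    (hchord : ∀ x y, u x + ℓ = u y → v x ≠ v y) (hav : ∀ x, v x = 0 → ℓ < |u x|) :
    ∃ σ : ℤˣ, ∀ x, v x = 0 → 0 < σ • u x := by
  by_contra! h
  obtain ⟨x, hvx, hux⟩ := h 1
  obtain ⟨y, hvy, huy⟩ := h (-1)
  let γ := PathConnectedSpace.somePath x y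
  obtain ⟨s, t, hust, hvst⟩ := exists_chord_of_lt_abs (p := u ∘ γ.extend) (q := v ∘ γ.extend)
    (hu.comp γ.continuous_extend) (hv.comp γ.continuous_extend) zero_le_one
    (by simpa using hvx) (by simpa using hvy) (by simpa using hux) (by simpa using huy) hℓ
    fun t ↦ hav _
  exact hchord _ _ hust hvst

theorem neg_and_neg_of_nonpos_of_nonpos {X : Type*} [TopologicalSpace X] [PreconnectedSpace X]
    {u v : X → ℝ} (hu : Continuous u) (hv : Continuous v) (huv : ∀ x, v x = 0 → 0 < u x)
    (hvu : ∀ x, u x = 0 → 0 < v x) {x : X} (hux : u x ≤ 0) (hvx : v x ≤ 0) (y : X) :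
    u y < 0 ∧ v y < 0 := by
  rw [← max_lt_iff]
  by_contra! hy
  obtain ⟨z, hz⟩ := intermediate_value_univ x y (hu.max hv) ⟨max_le hux hvx, hy⟩
  rcases max_choice (u z) (v z) with h | h
  · have hz : max (u z) (v z) = 0 := hz
    exact (le_max_right (u z) (v z)).not_gt (hz ▸ hvu z (h ▸ hz))
  · have hz : max (u z) (v z) = 0 := hz
    exact (le_max_left (u z) (v z)).not_gt (hz ▸ huv z (h ▸ hz))

theorem exists_abs_le_of_quadrants {X : Type*} [TopologicalSpace X] [PathConnectedSpace X]
    {u v : X → ℝ} (hu : Continuous u) (hv : Continuous v) {ℓ : ℝ} (hℓ : 0 < ℓ)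
    (hchord_u : ∀ x y, u x + ℓ = u y → v x ≠ v y) (hchord_v : ∀ x y, v x + ℓ = v y → u x ≠ u y)
    (hquad : ∀ σ τ : ℤˣ, ∃ x, 0 ≤ σ • u x ∧ 0 ≤ τ • v x) :
    ∃ x, |u x| ≤ ℓ ∧ |v x| ≤ ℓ := by
  -- Otherwise `u` has a constant sign `σ` on `v = 0` and `v` a constant sign `τ` on `u = 0`, so no
  -- path leaves the quadrant opposite to `(σ, τ)`.
  by_contra! hfar
  obtain ⟨σ, hσ⟩ := exists_forall_smul_pos hu hv hℓ hchord_u fun x hx ↦ by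
    contrapose! hfar
    exact ⟨x, hfar, by simpa [hx] using hℓ.le⟩
  obtain ⟨τ, hτ⟩ := exists_forall_smul_pos hv hu hℓ hchord_v fun x hx ↦
    hfar x (by simpa [hx] using hℓ.le)
  obtain ⟨x, hux, hvx⟩ := hquad (-σ) (-τ)
  obtain ⟨y, huy, -⟩ := hquad σ τ
  have := neg_and_neg_of_nonpos_of_nonpos (hu.const_smul σ) (hv.const_smul τ)
    (fun z hz ↦ hσ z ((smul_eq_zero_iff_eq τ).1 hz))
    (fun z hz ↦ hτ z ((smul_eq_zero_iff_eq σ).1 hz))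
    (by simpa [Units.neg_smul] using hux) (by simpa [Units.neg_smul] using hvx) y
  exact huy.not_gt this.1

/-! ### Euclidean space and the torus -/

@[simp] theorem pt_apply_zero (a b : ℝ) : pt a b 0 = a := rfl

@[simp] theorem pt_apply_one (a b : ℝ) : pt a b 1 = b := rfl

theorem ext_fin_two {x y : E 2} (h₀ : x 0 = y 0) (h₁ : x 1 = y 1) : x = y :=
  PiLp.ext <| Fin.forall_fin_two.2 ⟨h₀, h₁⟩

theorem pt_intCast_mem_ZLat (a b : ℤ) : pt a b ∈ ZLat 2 :=
  Fin.forall_fin_two.2 ⟨⟨a, rfl⟩, ⟨b, rfl⟩⟩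

theorem norm_le_sqrt_mul_of_forall_abs_le {d : ℕ} {x : E d} {C : ℝ} (hC : 0 ≤ C)
    (hx : ∀ i, |x i| ≤ C) : ‖x‖ ≤ √d * C := by
  rw [EuclideanSpace.norm_eq, Real.sqrt_le_left (by positivity), mul_pow,
    Real.sq_sqrt (Nat.cast_nonneg d)]
  simpa using Finset.sum_le_card_nsmul Finset.univ (fun i ↦ |x i| ^ 2) (C ^ 2)
    fun i _ ↦ pow_le_pow_left₀ (abs_nonneg _) (hx i) 2

theorem closure_setOf_forall_mem {d : ℕ} (s : Fin d → Set ℝ) :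
    closure {z : E d | ∀ i, z i ∈ s i} = {z | ∀ i, z i ∈ closure (s i)} := by
  have hpi (t : Fin d → Set ℝ) :
      {z : E d | ∀ i, z i ∈ t i} = EuclideanSpace.equiv (Fin d) ℝ ⁻¹' univ.pi t := by
    ext; simp
  rw [hpi, hpi, ← closure_pi_set]
  exact ((EuclideanSpace.equiv (Fin d) ℝ).toHomeomorph.preimage_closure _).symm

/-- The cube `[0, 1/2]^d`: it embeds in the torus, and its vertices are the points that the example
translates by lattice vectors. -/
def halfCube (d : ℕ) : Set (E d) := {z | ∀ i, z i ∈ Icc 0 (1 / 2)}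

theorem isPathConnected_halfCube (d : ℕ) : IsPathConnected (halfCube d) := by
  refine Convex.isPathConnected (fun x hx y hy a b ha hb hab i ↦ ?_) ⟨0, fun i ↦ by simp⟩
  exact convex_Icc (𝕜 := ℝ) 0 (1 / 2) (hx i) (hy i) ha hb hab

theorem isBounded_halfCube (d : ℕ) : Bornology.IsBounded (halfCube d) :=
  isBounded_iff_forall_norm_le.2 ⟨√d * (1 / 2), fun _ hz ↦
    norm_le_sqrt_mul_of_forall_abs_le (by norm_num) fun i ↦
      (abs_of_nonneg (hz i).1).trans_le (hz i).2⟩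

theorem injOn_tpi_halfCube (d : ℕ) : InjOn (tpi d) (halfCube d) := fun x hx y hy hxy ↦ by
  refine PiLp.ext fun i ↦ ?_
  obtain ⟨k, hk⟩ := QuotientAddGroup.eq.1 hxy i
  have hk : -x i + y i = k := hk
  obtain ⟨hx₀, hx₁⟩ := hx i
  obtain ⟨hy₀, hy₁⟩ := hy i
  have hlower : -1 < k := by exact_mod_cast (by linarith : (-1 : ℝ) < k)
  have hupper : k < 1 := by exact_mod_cast (by linarith : (k : ℝ) < 1)
  obtain rfl : k = 0 := by lia
  rw [Int.cast_zero] at hk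
  linarith

/-! ### Rotation sets -/

theorem mem_rotRel_iff {d : ℕ} {F : E d → E d} {W : Set (E d)} {ρ : E d} :
    ρ ∈ rotRel F W ↔
      ∀ ε > 0, ∃ᶠ n : ℕ in atTop, ∃ z ∈ W, dist ((n : ℝ)⁻¹ • (F^[n] z - z)) ρ < ε := by
  constructor
  · rintro ⟨n, z, hn, hz, hlim⟩ ε hε
    exact hn.frequently <| Eventually.frequently <|
      (hlim.eventually (ball_mem_nhds ρ hε)).mono fun i hi ↦ ⟨z i, hz i, hi⟩
  · intro h
    choose n hn z hz hdist using fun k : ℕ ↦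
      frequently_atTop.1 (h (1 / ((k : ℝ) + 1)) Nat.one_div_pos_of_nat) k
    exact ⟨n, z, tendsto_atTop_mono hn tendsto_id, hz, tendsto_iff_dist_tendsto_zero.2 <|
      squeeze_zero (fun _ ↦ dist_nonneg) (fun k ↦ (hdist k).le)
        tendsto_one_div_add_atTop_nhds_zero_nat⟩

theorem isClosed_rotRel {d : ℕ} (F : E d → E d) (W : Set (E d)) : IsClosed (rotRel F W) := by
  refine isClosed_of_closure_subset fun ρ hρ ↦ mem_rotRel_iff.2 fun ε hε ↦ ?_
  obtain ⟨ρ', hρ', hdist⟩ := Metric.mem_closure_iff.1 hρ (ε / 2) (half_pos hε)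
  refine (mem_rotRel_iff.1 hρ' (ε / 2) (half_pos hε)).mono fun n ⟨z, hz, hlt⟩ ↦ ⟨z, hz, ?_⟩
  linarith [dist_triangle_right ((n : ℝ)⁻¹ • (F^[n] z - z)) ρ ρ']

theorem mem_rotRel_of_norm_le {d : ℕ} {F : E d → E d} {W : Set (E d)} {ρ : E d} {C : ℝ}
    (h : ∃ᶠ n : ℕ in atTop, ∃ z ∈ W, ‖F^[n] z - z - (n : ℝ) • ρ‖ ≤ C) : ρ ∈ rotRel F W := by
  refine mem_rotRel_iff.2 fun ε hε ↦ ?_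
  have hlarge : ∀ᶠ n : ℕ in atTop, 0 < n ∧ C / n < ε := (eventually_gt_atTop 0).and <|
    (tendsto_const_div_atTop_nhds_zero_nat C).eventually_lt_const hε
  refine (h.and_eventually hlarge).mono fun n ⟨⟨z, hz, hC⟩, hn, hlt⟩ ↦ ⟨z, hz, ?_⟩
  have hn' : (0 : ℝ) < n := Nat.cast_pos.2 hn
  calc dist ((n : ℝ)⁻¹ • (F^[n] z - z)) ρ
      = ‖(n : ℝ)⁻¹ • (F^[n] z - z - (n : ℝ) • ρ)‖ := by
        rw [dist_eq_norm, smul_sub _ _ ((n : ℝ) • ρ), inv_smul_smul₀ hn'.ne']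
    _ = ‖F^[n] z - z - (n : ℝ) • ρ‖ / n := by
        rw [norm_smul, norm_inv, Real.norm_natCast, inv_mul_eq_div]
    _ ≤ C / n := by gcongr
    _ < ε := hlt

theorem iterate_eq_add_nsmul {M : Type*} [AddMonoid M] {F : M → M} {z m : M}
    (hF : Function.Commute F (· + m)) (hz : F z = z + m) (n : ℕ) : F^[n] z = z + n • m := by
  rw [hF.iterate_eq_of_map_eq n hz, add_right_iterate]

/-- A self-map of `ℝ^d` is lattice equivariant if it commutes with the translations by `ℤ^d`; these
are the maps that descend to maps of `T^d` homotopic to the identity. -/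
def LatticeEquivariant {d : ℕ} (F : E d → E d) : Prop :=
  ∀ z : E d, ∀ m ∈ ZLat d, F (z + m) = F z + m

namespace LatticeEquivariant

variable {d : ℕ} {F G : E d → E d}

theorem comp (hG : LatticeEquivariant G) (hF : LatticeEquivariant F) :
    LatticeEquivariant (G ∘ F) := fun z m hm ↦ by
  simp only [Function.comp_apply, hF z m hm, hG _ m hm]

theorem iterate (hF : LatticeEquivariant F) (n : ℕ) : LatticeEquivariant F^[n] :=
  fun z m hm ↦ Function.Commute.iterate_left (g := (· + m)) (fun z ↦ hF z m hm) n z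

theorem symm {F : E d ≃ₜ E d} (hF : LatticeEquivariant F) : LatticeEquivariant F.symm :=
  fun z m hm ↦ F.injective <| by simp [hF _ m hm]

theorem iterate_eq_add_smul (hF : LatticeEquivariant F) {z m : E d} (hm : m ∈ ZLat d)
    (hz : F z = z + m) (n : ℕ) : F^[n] z = z + (n : ℝ) • m := by
  rw [iterate_eq_add_nsmul (fun z ↦ hF z m hm) hz, Nat.cast_smul_eq_nsmul]

theorem mem_rotSet_of_map_eq_add (hF : LatticeEquivariant F) {z m : E d} (hm : m ∈ ZLat d)
    (hz : F z = z + m) : m ∈ rotSet F :=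
  mem_rotRel_of_norm_le (C := 0) <| Frequently.of_forall fun n ↦
    ⟨z, mem_univ z, by simp [hF.iterate_eq_add_smul hm hz]⟩

theorem exists_continuous_tpi_eq (hF : LatticeEquivariant F) (hFc : Continuous F) :
    ∃ f : T d → T d, Continuous f ∧ ∀ z, f (tpi d z) = tpi d (F z) := by
  refine ⟨Quotient.lift (tpi d ∘ F) fun z w hzw ↦ ?_,
    (QuotientAddGroup.continuous_mk.comp hFc).quotient_lift _, fun z ↦ rfl⟩
  have hmem : -z + w ∈ ZLat d := QuotientAddGroup.leftRel_apply.1 hzw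
  refine QuotientAddGroup.eq.2 ?_
  rwa [← add_neg_cancel_left z w, hF z _ hmem, neg_add_cancel_left]

theorem exists_isLift {F : E d ≃ₜ E d} (hF : LatticeEquivariant F) :
    ∃ f : T d ≃ₜ T d, IsLift F f := by
  obtain ⟨f, hfc, hf⟩ := hF.exists_continuous_tpi_eq F.continuous
  obtain ⟨g, hgc, hg⟩ := hF.symm.exists_continuous_tpi_eq F.symm.continuous
  have hgf : Function.LeftInverse g f := QuotientAddGroup.mk_surjective.forall.2 fun z ↦ by
    change g (f (tpi d z)) = tpi d z
    rw [hf, hg, F.symm_apply_apply]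
  have hfg : Function.RightInverse g f := QuotientAddGroup.mk_surjective.forall.2 fun z ↦ by
    change f (g (tpi d z)) = tpi d z
    rw [hg, hf, F.apply_symm_apply]
  exact ⟨⟨⟨f, g, hgf, hfg⟩, hfc, hgc⟩, fun z ↦ (hf z).symm, hF⟩

theorem eq_zero_of_map_add_eq (hF : LatticeEquivariant F) (hinj : Function.Injective F)
    {Q : Set (E d)} (hQ : InjOn (tpi d) Q) {x y m : E d} (hx : x ∈ Q) (hy : y ∈ Q)
    (hm : m ∈ ZLat d) (hxy : F x + m = F y) : m = 0 := by
  rw [← hF x m hm] at hxy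
  obtain rfl : x + m = y := hinj hxy
  simpa using hQ hx hy (QuotientAddGroup.mk_add_of_mem x hm).symm

theorem exists_forall_abs_sub_le_one {F : E 2 → E 2}
    (hF : LatticeEquivariant F) (hFc : Continuous F) (hinj : Function.Injective F)
    {Q : Set (E 2)} (hQ : IsPathConnected Q) (hQinj : InjOn (tpi 2) Q) {w : E 2}
    (hquad : ∀ σ : Fin 2 → ℤˣ, ∃ z ∈ Q, ∀ i, 0 ≤ σ i • (F z i - w i)) :
    ∃ z ∈ Q, ∀ i, |F z i - w i| ≤ 1 := by
  have := isPathConnected_iff_pathConnectedSpace.1 hQ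
  have hcont (i : Fin 2) : Continuous fun x : Q ↦ F x i - w i := by fun_prop
  obtain ⟨⟨z, hz⟩, h₀, h₁⟩ := exists_abs_le_of_quadrants (hcont 0) (hcont 1) one_pos
    (fun x y h₀ h₁ ↦ by
      have hxy : F x + pt (1 : ℤ) (0 : ℤ) = F y := by
        refine ext_fin_two ?_ ?_ <;>
          simp only [PiLp.add_apply, pt_apply_zero, pt_apply_one] <;> push_cast <;> linarith
      have := hF.eq_zero_of_map_add_eq hinj hQinj x.2 y.2 (pt_intCast_mem_ZLat 1 0) hxy
      simpa using congr($this 0))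
    (fun x y h₁ h₀ ↦ by
      have hxy : F x + pt (0 : ℤ) (1 : ℤ) = F y := by
        refine ext_fin_two ?_ ?_ <;>
          simp only [PiLp.add_apply, pt_apply_zero, pt_apply_one] <;> push_cast <;> linarith
      have := hF.eq_zero_of_map_add_eq hinj hQinj x.2 y.2 (pt_intCast_mem_ZLat 0 1) hxy
      simpa using congr($this 1))
    (fun σ τ ↦ by
      obtain ⟨z, hz, hpos⟩ := hquad ![σ, τ]
      exact ⟨⟨z, hz⟩, hpos 0, hpos 1⟩)
  exact ⟨z, hz, Fin.forall_fin_two.2 ⟨h₀, h₁⟩⟩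

theorem eventually_forall_nonneg_smul_sub (hF : LatticeEquivariant F) {z m ρ : E d}
    (hm : m ∈ ZLat d) (hz : F z = z + m) {σ : Fin d → ℤˣ} (hσ : ∀ i, 0 < σ i • (m i - ρ i)) :
    ∀ᶠ n : ℕ in atTop, ∀ i, 0 ≤ σ i • (F^[n] z i - ((n : ℝ) • ρ) i) := by
  refine eventually_all.2 fun i ↦ ?_
  have hlim : Tendsto (fun n : ℕ ↦ σ i • z i + n * σ i • (m i - ρ i)) atTop atTop :=
    tendsto_atTop_add_const_left _ _ (tendsto_natCast_atTop_atTop.atTop_mul_const (hσ i))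
  refine (hlim.eventually_ge_atTop 0).mono fun n hn ↦ ?_
  have hdisp : F^[n] z i - ((n : ℝ) • ρ) i = z i + n * (m i - ρ i) := by
    simp only [hF.iterate_eq_add_smul hm hz, PiLp.add_apply, PiLp.smul_apply, smul_eq_mul]
    ring
  rwa [hdisp, smul_add, ← mul_smul_comm]

theorem mem_rotSet_of_quadrants {F : E 2 → E 2}
    (hF : LatticeEquivariant F) (hFc : Continuous F) (hinj : Function.Injective F)
    {Q : Set (E 2)} (hQ : IsPathConnected Q) (hQb : Bornology.IsBounded Q)
    (hQinj : InjOn (tpi 2) Q) {ρ : E 2}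
    (hquad : ∀ σ : Fin 2 → ℤˣ, ∃ z ∈ Q, ∃ m ∈ ZLat 2, F z = z + m ∧
      ∀ i, 0 < σ i • (m i - ρ i)) : ρ ∈ rotSet F := by
  choose z hz m hm hzm hpos using hquad
  obtain ⟨R, hR⟩ := hQb.exists_norm_le
  have hlarge := eventually_all.2 fun σ ↦
    hF.eventually_forall_nonneg_smul_sub (hm σ) (hzm σ) (hpos σ)
  refine mem_rotRel_of_norm_le (C := √(2 : ℕ) * 1 + R) (hlarge.mono fun n hn ↦ ?_).frequently
  obtain ⟨x, hx, hxn⟩ := (hF.iterate n).exists_forall_abs_sub_le_one (hFc.iterate n)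
    (hinj.iterate n) hQ hQinj (w := (n : ℝ) • ρ) fun σ ↦ ⟨z σ, hz σ, hn σ⟩
  refine ⟨x, mem_univ x, ?_⟩
  calc ‖F^[n] x - x - (n : ℝ) • ρ‖ ≤ ‖F^[n] x - (n : ℝ) • ρ‖ + ‖x‖ := by
        rw [sub_right_comm]; exact norm_sub_le _ _
    _ ≤ √(2 : ℕ) * 1 + R :=
        add_le_add (norm_le_sqrt_mul_of_forall_abs_le zero_le_one hxn) (hR x hx)

theorem setOf_forall_mem_Icc_subset_rotSet {F : E 2 → E 2}
    (hF : LatticeEquivariant F) (hFc : Continuous F) (hinj : Function.Injective F)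
    {Q : Set (E 2)} (hQ : IsPathConnected Q) (hQb : Bornology.IsBounded Q)
    (hQinj : InjOn (tpi 2) Q) {l u : Fin 2 → ℝ} (hlu : ∀ i, l i < u i)
    (hcorner : ∀ σ : Fin 2 → ℤˣ, ∃ z ∈ Q, ∃ m ∈ ZLat 2, F z = z + m ∧
      ∀ i, m i = if σ i = 1 then u i else l i) :
    {ρ : E 2 | ∀ i, ρ i ∈ Icc (l i) (u i)} ⊆ rotSet F := by
  have hclosure := closure_setOf_forall_mem fun i ↦ Ioo (l i) (u i)
  simp_rw [closure_Ioo (hlu _).ne] at hclosure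
  rw [← hclosure]
  refine closure_minimal (fun ρ hρ ↦ ?_) (isClosed_rotRel F univ)
  refine hF.mem_rotSet_of_quadrants hFc hinj hQ hQb hQinj fun σ ↦ ?_
  obtain ⟨z, hz, m, hm, hzm, hmi⟩ := hcorner σ
  refine ⟨z, hz, m, hm, hzm, fun i ↦ ?_⟩
  obtain ⟨hl, hu⟩ := hρ i
  rcases Int.units_eq_one_or (σ i) with hσ | hσ
  · simpa [hmi, hσ] using hu
  · simpa [hmi, hσ, Units.neg_smul] using hl

theorem unitSquare_subset_rotSet {F : E 2 → E 2}
    (hF : LatticeEquivariant F) (hFc : Continuous F) (hinj : Function.Injective F)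
    (h₀₀ : F (pt 0 0) = pt 0 0 + pt 0 0) (h₁₀ : F (pt (1 / 2) 0) = pt (1 / 2) 0 + pt 0 1)
    (h₀₁ : F (pt 0 (1 / 2)) = pt 0 (1 / 2) + pt 1 0)
    (h₁₁ : F (pt (1 / 2) (1 / 2)) = pt (1 / 2) (1 / 2) + pt 1 1) :
    {ρ : E 2 | ρ 0 ∈ Icc (0 : ℝ) 1 ∧ ρ 1 ∈ Icc (0 : ℝ) 1} ⊆ rotSet F := by
  have hzero : (0 : ℝ) ∈ Icc 0 (1 / 2) := by norm_num
  have hhalf : (1 / 2 : ℝ) ∈ Icc 0 (1 / 2) := by norm_num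
  have hvertex {a b : ℝ} (ha : a ∈ Icc 0 (1 / 2)) (hb : b ∈ Icc 0 (1 / 2)) :
      pt a b ∈ halfCube 2 := Fin.forall_fin_two.2 ⟨ha, hb⟩
  have hsubset := hF.setOf_forall_mem_Icc_subset_rotSet hFc hinj (isPathConnected_halfCube 2)
    (isBounded_halfCube 2) (injOn_tpi_halfCube 2) (l := 0) (u := 1) (fun _ ↦ one_pos) fun σ ↦ by
      rcases Int.units_eq_one_or (σ 0) with hσ₀ | hσ₀ <;>
        rcases Int.units_eq_one_or (σ 1) with hσ₁ | hσ₁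
      · exact ⟨_, hvertex hhalf hhalf, _, by simpa using pt_intCast_mem_ZLat 1 1, h₁₁,
          Fin.forall_fin_two.2 (by simp [hσ₀, hσ₁])⟩
      · exact ⟨_, hvertex hzero hhalf, _, by simpa using pt_intCast_mem_ZLat 1 0, h₀₁,
          Fin.forall_fin_two.2 (by simp [hσ₀, hσ₁])⟩
      · exact ⟨_, hvertex hhalf hzero, _, by simpa using pt_intCast_mem_ZLat 0 1, h₁₀,
          Fin.forall_fin_two.2 (by simp [hσ₀, hσ₁])⟩
      · exact ⟨_, hvertex hzero hzero, _, by simpa using pt_intCast_mem_ZLat 0 0, h₀₀,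
          Fin.forall_fin_two.2 (by simp [hσ₀, hσ₁])⟩
  exact fun ρ hρ ↦ hsubset (Fin.forall_fin_two.2 hρ)

end LatticeEquivariant

/-! ### Shears -/

/-- The shear `z ↦ z + ψ (z j) eᵢ` of `ℝ^d`. -/
def shear {d : ℕ} {i j : Fin d} (hij : i ≠ j) (ψ : C(ℝ, ℝ)) : E d ≃ₜ E d where
  toFun z := z + ψ (z j) • EuclideanSpace.single i 1
  invFun z := z - ψ (z j) • EuclideanSpace.single i 1
  left_inv z := by simp [hij.symm]
  right_inv z := by simp [hij.symm]
  continuous_toFun := by fun_prop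
  continuous_invFun := by fun_prop

theorem latticeEquivariant_shear {d : ℕ} {i j : Fin d} (hij : i ≠ j) {ψ : C(ℝ, ℝ)}
    (hψ : Function.Periodic ψ 1) : LatticeEquivariant (shear hij ψ) := fun z m hm ↦ by
  obtain ⟨k, hk⟩ := hm j
  have hψk : ψ (z j + k) = ψ (z j) := by simpa using hψ.int_mul k (z j)
  simp [shear, hk, hψk, add_right_comm]

theorem shear_shear_apply (ψ₁ ψ₂ : C(ℝ, ℝ)) (z : E 2) :
    shear zero_ne_one ψ₂ (shear one_ne_zero ψ₁ z) =
      pt (z 0 + ψ₂ (z 1 + ψ₁ (z 0))) (z 1 + ψ₁ (z 0)) :=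
  ext_fin_two (by simp [shear]) (by simp [shear])

/-- **Misiurewicz–Ziemian type examples.**
For continuous 1-periodic `ψ₁, ψ₂` with `ψᵢ(0) = 0`, `ψᵢ(1/2) = 1`, the map
`F(x,y) = (x + ψ₂(y + ψ₁(x)), y + ψ₁(x))` is a lift of a torus homeomorphism
homotopic to the identity, the four indicated points are fixed with rotation
vectors `(0,0), (0,1), (1,0), (1,1) ∈ ρ(F)`, and by convexity `[0,1]² ⊆ ρ(F)`. -/
theorem misiurewicz_ziemian_example
    (ψ₁ ψ₂ : ℝ → ℝ) (hc₁ : Continuous ψ₁) (hc₂ : Continuous ψ₂)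
    (hp₁ : Function.Periodic ψ₁ 1) (hp₂ : Function.Periodic ψ₂ 1)
    (h₁0 : ψ₁ 0 = 0) (h₂0 : ψ₂ 0 = 0)
    (h₁half : ψ₁ (1 / 2) = 1) (h₂half : ψ₂ (1 / 2) = 1)
    (F : E 2 → E 2)
    (hF : ∀ z : E 2, F z = pt (z 0 + ψ₂ (z 1 + ψ₁ (z 0))) (z 1 + ψ₁ (z 0))) :
    IsHomeomorph F ∧
    (∀ z : E 2, ∀ m ∈ ZLat 2, F (z + m) = F z + m) ∧
    (∃ f : T 2 ≃ₜ T 2, ∀ z : E 2, tpi 2 (F z) = f (tpi 2 z)) ∧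
    F (pt 0 0) = pt 0 0 ∧
    F (pt (1 / 2) 0) = pt (1 / 2) 0 + pt 0 1 ∧
    F (pt 0 (1 / 2)) = pt 0 (1 / 2) + pt 1 0 ∧
    F (pt (1 / 2) (1 / 2)) = pt (1 / 2) (1 / 2) + pt 1 1 ∧
    pt 0 0 ∈ rotSet F ∧ pt 0 1 ∈ rotSet F ∧ pt 1 0 ∈ rotSet F ∧ pt 1 1 ∈ rotSet F ∧
    {ρ : E 2 | ρ 0 ∈ Set.Icc (0 : ℝ) 1 ∧ ρ 1 ∈ Set.Icc (0 : ℝ) 1} ⊆ rotSet F := by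
  let H : E 2 ≃ₜ E 2 := (shear one_ne_zero ⟨ψ₁, hc₁⟩).trans (shear zero_ne_one ⟨ψ₂, hc₂⟩)
  obtain rfl : F = H := funext fun z ↦ (hF z).trans (shear_shear_apply ⟨ψ₁, hc₁⟩ ⟨ψ₂, hc₂⟩ z).symm
  have hH : LatticeEquivariant H :=
    (latticeEquivariant_shear zero_ne_one hp₂).comp (latticeEquivariant_shear one_ne_zero hp₁)
  obtain ⟨f, hf, -⟩ := hH.exists_isLift
  have h₂one : ψ₂ 1 = 0 := by simpa [h₂0] using hp₂ 0
  have h₂add : ψ₂ (1 / 2 + 1) = 1 := by rw [hp₂, h₂half]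
  have h00 : H (pt 0 0) = pt 0 0 + pt 0 0 := by
    rw [hF]; exact ext_fin_two (by simp [h₁0, h₂0]) (by simp [h₁0])
  have h10 : H (pt (1 / 2) 0) = pt (1 / 2) 0 + pt 0 1 := by
    rw [hF]; exact ext_fin_two (by simp [-one_div, h₁half, h₂one]) (by simp [-one_div, h₁half])
  have h01 : H (pt 0 (1 / 2)) = pt 0 (1 / 2) + pt 1 0 := by
    rw [hF]; exact ext_fin_two (by simp [-one_div, h₁0, h₂half]) (by simp [-one_div, h₁0])
  have h11 : H (pt (1 / 2) (1 / 2)) = pt (1 / 2) (1 / 2) + pt 1 1 := by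
    rw [hF]; exact ext_fin_two (by simp [-one_div, h₁half, h₂add]) (by simp [-one_div, h₁half])
  exact ⟨H.isHomeomorph, hH, ⟨f, hf⟩, h00.trans (ext_fin_two (by simp) (by simp)), h10, h01, h11,
    hH.mem_rotSet_of_map_eq_add (by simpa using pt_intCast_mem_ZLat 0 0) h00,
    hH.mem_rotSet_of_map_eq_add (by simpa using pt_intCast_mem_ZLat 0 1) h10,
    hH.mem_rotSet_of_map_eq_add (by simpa using pt_intCast_mem_ZLat 1 0) h01,
    hH.mem_rotSet_of_map_eq_add (by simpa using pt_intCast_mem_ZLat 1 1) h11,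
    hH.unitSquare_subset_rotSet H.continuous H.injective h00 h10 h01 h11⟩
end
end
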